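/- arXiv:1410.5535 — 2 statements merged into one kernel-verified Lean document; each statement's English description precedes it below -/
import Mathlib

section
/- Let n ≥ 2 be an integer. There exists a constant C > 0 (depending only on n) such that for every ε ∈ (0,1): ∫₀^∞ ∫₀^∞ ε² τ² r^{2n−1} / ( ((1+ε²r²)² + ε⁴τ²) (τ² + (1+r²)²)^{n+1} ) dτ dr ≤ C ε^{1/2}. -/
open MeasureTheory Real Set

/-!
Put `X = τ² + (1 + r²)²`. The first factor of the denominator is at least `1`, and for `n ≥ 2` one
has `τ² r^(2n-1) ≤ X ^ n`, so the integrand is at most `ε² / X`, with `ε` entering only through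
the prefactor. Since `∫₀^∞ dτ / X = (π/2) / (1 + r²)` and `∫₀^∞ dr / (1 + r²) = π/2`, the double
integral is at most `(π/2)² ε²`, with no need to split the range of `τ`; and `ε² ≤ ε^(1/2)` on
`(0,1)`.
-/

section InvSqAddSq

variable {a c : ℝ}

lemma inv_sq_add_sq (ha : a ≠ 0) (x : ℝ) :
    (x ^ 2 + a ^ 2)⁻¹ = (a ^ 2)⁻¹ * (1 + (x / a) ^ 2)⁻¹ := by
  rw [← mul_inv, mul_add, div_pow, mul_div_cancel₀ _ (pow_ne_zero 2 ha), mul_one, add_comm]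

lemma integrable_inv_sq_add_sq (ha : a ≠ 0) : Integrable fun x : ℝ ↦ (x ^ 2 + a ^ 2)⁻¹ := by
  simp_rw [inv_sq_add_sq ha]
  exact (integrable_inv_one_add_sq.comp_div ha).const_mul _

lemma integral_Ioi_inv_sq_add_sq (ha : 0 < a) :
    ∫ x in Ioi (0 : ℝ), (x ^ 2 + a ^ 2)⁻¹ = π / 2 * a⁻¹ := by
  have scaled : ∫ x in Ioi (0 : ℝ), (1 + (x / a) ^ 2)⁻¹ = a * (π / 2) := by
    simp_rw [div_eq_mul_inv _ a]
    rw [integral_comp_mul_right_Ioi (fun x : ℝ ↦ (1 + x ^ 2)⁻¹) 0 (inv_pos.2 ha),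
      integral_Ioi_inv_one_add_sq, zero_mul, arctan_zero, sub_zero, inv_inv, smul_eq_mul]
  simp_rw [inv_sq_add_sq ha.ne']
  rw [integral_const_mul, scaled]
  field

lemma integral_Ioi_le_of_le_inv_sq_add_sq {f : ℝ → ℝ} (ha : 0 < a)
    (f_nonneg : ∀ x > 0, 0 ≤ f x) (f_le : ∀ x > 0, f x ≤ c * (x ^ 2 + a ^ 2)⁻¹) :
    ∫ x in Ioi 0, f x ≤ c * (π / 2) * a⁻¹ :=
  calc ∫ x in Ioi 0, f x
      ≤ ∫ x in Ioi 0, c * (x ^ 2 + a ^ 2)⁻¹ :=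
        integral_mono_of_nonneg (ae_restrict_of_forall_mem measurableSet_Ioi f_nonneg)
          ((integrable_inv_sq_add_sq ha.ne').integrableOn.const_mul c)
          (ae_restrict_of_forall_mem measurableSet_Ioi f_le)
    _ = c * (π / 2) * a⁻¹ := by
        rw [integral_const_mul, integral_Ioi_inv_sq_add_sq ha, mul_assoc]

lemma integral_integral_Ioi_le_of_le_inv_sq_add_sq {α : Type*} [MeasurableSpace α]
    {μ : Measure α} {b : α → ℝ} {f : α → ℝ → ℝ} (b_pos : ∀ᵐ r ∂μ, 0 < b r)
    (b_inv_integrable : Integrable (fun r ↦ (b r)⁻¹) μ)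
    (f_nonneg : ∀ᵐ r ∂μ, ∀ x > 0, 0 ≤ f r x)
    (f_le : ∀ᵐ r ∂μ, ∀ x > 0, f r x ≤ c * (x ^ 2 + b r ^ 2)⁻¹) :
    ∫ r, (∫ x in Ioi 0, f r x) ∂μ ≤ c * (π / 2) * ∫ r, (b r)⁻¹ ∂μ := by
  rw [← integral_const_mul]
  refine integral_mono_of_nonneg ?_ (b_inv_integrable.const_mul _) ?_
  · filter_upwards [f_nonneg] with r hr using setIntegral_nonneg measurableSet_Ioi hr
  · filter_upwards [b_pos, f_nonneg, f_le] with r hb h_nonneg h_le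
    exact integral_Ioi_le_of_le_inv_sq_add_sq hb h_nonneg h_le

end InvSqAddSq

lemma pow_two_mul_add_one_le_one_add_sq_pow (r : ℝ) (m : ℕ) :
    r ^ (2 * m + 1) ≤ (1 + r ^ 2) ^ (m + 1) := by
  have le_one_add_sq : r ≤ 1 + r ^ 2 := by nlinarith [sq_nonneg (r - 1)]
  calc r ^ (2 * m + 1) = (r ^ 2) ^ m * r := by rw [pow_succ, pow_mul]
    _ ≤ (r ^ 2) ^ m * (1 + r ^ 2) := by gcongr
    _ ≤ (1 + r ^ 2) ^ m * (1 + r ^ 2) := by gcongr; exact le_add_of_nonneg_left zero_le_one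
    _ = (1 + r ^ 2) ^ (m + 1) := (pow_succ _ _).symm

lemma sq_mul_pow_le_sq_add_one_add_sq_sq_pow {n : ℕ} (hn : 2 ≤ n) (r τ : ℝ) :
    τ ^ 2 * r ^ (2 * n - 1) ≤ (τ ^ 2 + (1 + r ^ 2) ^ 2) ^ n := by
  obtain ⟨m, rfl⟩ : ∃ m, n = m + 1 := ⟨n - 1, by omega⟩
  have pow_le : r ^ (2 * m + 1) ≤ ((1 + r ^ 2) ^ 2) ^ m :=
    calc r ^ (2 * m + 1) ≤ (1 + r ^ 2) ^ (m + 1) := pow_two_mul_add_one_le_one_add_sq_pow r m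
      _ ≤ (1 + r ^ 2) ^ (2 * m) :=
        pow_le_pow_right₀ (le_add_of_nonneg_right (sq_nonneg r)) (by omega)
      _ = ((1 + r ^ 2) ^ 2) ^ m := pow_mul _ _ _
  calc τ ^ 2 * r ^ (2 * (m + 1) - 1) = τ ^ 2 * r ^ (2 * m + 1) := rfl
    _ ≤ τ ^ 2 * ((1 + r ^ 2) ^ 2) ^ m := by gcongr
    _ ≤ (τ ^ 2 + (1 + r ^ 2) ^ 2) * (τ ^ 2 + (1 + r ^ 2) ^ 2) ^ m := by
        gcongr
        · exact le_add_of_nonneg_right (sq_nonneg _)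
        · exact le_add_of_nonneg_left (sq_nonneg _)
    _ = (τ ^ 2 + (1 + r ^ 2) ^ 2) ^ (m + 1) := (pow_succ' _ _).symm

lemma integrand_le_sq_mul_inv {n : ℕ} (hn : 2 ≤ n) (ε r τ : ℝ) :
    ε ^ 2 * τ ^ 2 * r ^ (2 * n - 1) /
        (((1 + ε ^ 2 * r ^ 2) ^ 2 + ε ^ 4 * τ ^ 2) * (τ ^ 2 + (1 + r ^ 2) ^ 2) ^ (n + 1)) ≤
      ε ^ 2 * (τ ^ 2 + (1 + r ^ 2) ^ 2)⁻¹ := by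
  set A := (1 + ε ^ 2 * r ^ 2) ^ 2 + ε ^ 4 * τ ^ 2
  set X := τ ^ 2 + (1 + r ^ 2) ^ 2
  have one_le_A : 1 ≤ A :=
    le_add_of_le_of_nonneg (one_le_pow₀ (le_add_of_nonneg_right (by positivity))) (by positivity)
  calc ε ^ 2 * τ ^ 2 * r ^ (2 * n - 1) / (A * X ^ (n + 1))
      = ε ^ 2 * (τ ^ 2 * r ^ (2 * n - 1)) / (A * X ^ (n + 1)) := by rw [mul_assoc]
    _ ≤ ε ^ 2 * X ^ n / (1 * X ^ (n + 1)) := by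
        gcongr
        exact sq_mul_pow_le_sq_add_one_add_sq_sq_pow hn r τ
    _ = ε ^ 2 * X⁻¹ := by field

theorem stmt_11_general {n : ℕ} (hn : 2 ≤ n) (ε : ℝ) :
    (∫ r in Ioi (0 : ℝ), ∫ τ in Ioi (0 : ℝ),
        ε ^ 2 * τ ^ 2 * r ^ (2 * n - 1) /
          (((1 + ε ^ 2 * r ^ 2) ^ 2 + ε ^ 4 * τ ^ 2) *
            (τ ^ 2 + (1 + r ^ 2) ^ 2) ^ (n + 1))) ≤ (π / 2) ^ 2 * ε ^ 2 := by
  refine (integral_integral_Ioi_le_of_le_inv_sq_add_sq (c := ε ^ 2) (b := fun r ↦ 1 + r ^ 2)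
    (ae_of_all _ fun r ↦ by positivity) integrable_inv_one_add_sq.integrableOn
    (ae_restrict_of_forall_mem measurableSet_Ioi fun r (hr : 0 < r) τ _ ↦ by positivity)
    (ae_of_all _ fun r τ _ ↦ integrand_le_sq_mul_inv hn ε r τ)).trans_eq ?_
  rw [integral_Ioi_inv_one_add_sq, arctan_zero]
  ring

theorem stmt_11 (n : ℕ) (hn : 2 ≤ n) :
    ∃ C : ℝ, 0 < C ∧ ∀ ε : ℝ, ε ∈ Ioo (0 : ℝ) 1 →
      (∫ r in Ioi (0 : ℝ), ∫ τ in Ioi (0 : ℝ),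
          ε ^ 2 * τ ^ 2 * r ^ (2 * n - 1) /
            (((1 + ε ^ 2 * r ^ 2) ^ 2 + ε ^ 4 * τ ^ 2) *
              (τ ^ 2 + (1 + r ^ 2) ^ 2) ^ (n + 1))) ≤ C * ε ^ ((1 : ℝ) / 2) := by
  refine ⟨(π / 2) ^ 2, by positivity, fun ε ⟨ε_pos, ε_lt_one⟩ ↦ (stmt_11_general hn ε).trans ?_⟩
  have sq_le_rpow_half : ε ^ 2 ≤ ε ^ ((1 : ℝ) / 2) := by
    rw [← rpow_two]
    exact rpow_le_rpow_of_exponent_ge ε_pos ε_lt_one.le (by norm_num)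
  gcongr
end

section
/- Let n ≥ 2 be an integer. There exists a constant C > 0 (depending only on n) such that for every ε ∈ (0,1]: ∫_{ℂ^n×ℝ} ( 4nε² / ((1+ε²|z|²)² + ε⁴τ²) ) · ( 4 / (τ² + (1+|z|²)²) )^{n} dz dτ ≤ C ε. -/
open MeasureTheory Real Set

/-- `normSq z = |z|²` for `z ∈ ℂⁿ`. -/
noncomputable def normSq {n : ℕ} (z : Fin n → ℂ) : ℝ := ∑ i, ‖z i‖ ^ 2

/-!
Let `N(z, τ) = |1 + |z|² + iτ|²` and let `δ_ε(z, τ) = (εz, ε²τ)` be the Heisenberg dilation. The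
integrand is `4nε² / N(δ_ε p) · (4 / N(p))ⁿ`. For `0 < ε ≤ 1` one has `N(δ_ε p) ≥ max(1, ε⁴ N(p))`,
hence `N(δ_ε p) ≥ (ε⁴ N(p))^θ` for `0 ≤ θ ≤ 1`. Taking `θ = (2 - α) / 4` bounds the integrand by a
multiple of `ε^α N(p)^(-(n + θ))`, which is integrable as soon as `n + θ > (n + 1) / 2`, that is,
`α < 2n`. The bound `Cε` is the case `α = 1`; for `n ≥ 2` the choice `α = 2` even gives `Cε²`.
-/

lemma rpow_neg_add_le_mul_rpow_neg {u v w a b : ℝ} (hu : 0 < u) (hv : 0 < v) (huw : u ≤ w)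
    (hvw : v ≤ w) (ha : 0 ≤ a) (hb : 0 ≤ b) : w ^ (-(a + b)) ≤ u ^ (-a) * v ^ (-b) := by
  rw [neg_add, rpow_add (hu.trans_le huw)]
  exact mul_le_mul (rpow_le_rpow_of_nonpos hu huw (neg_nonpos.2 ha))
    (rpow_le_rpow_of_nonpos hv hvw (neg_nonpos.2 hb)) (rpow_nonneg (hv.le.trans hvw) _)
    (rpow_nonneg hu.le _)

section ParabolicDecay

variable {E F : Type*} [NormedAddCommGroup E] [NormedSpace ℝ E] [FiniteDimensional ℝ E]
  [MeasurableSpace E] [BorelSpace E] [NormedAddCommGroup F] [NormedSpace ℝ F]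
  [FiniteDimensional ℝ F] [MeasurableSpace F] [BorelSpace F]

lemma integrable_sq_one_add_norm_sq_add_norm_sq_rpow_neg (μ : Measure E) [μ.IsAddHaarMeasure]
    (ν : Measure F) [ν.IsAddHaarMeasure] {β : ℝ}
    (hβ : (Module.finrank ℝ E : ℝ) / 4 + (Module.finrank ℝ F : ℝ) / 2 < β) :
    Integrable (fun p : E × F => ((1 + ‖p.1‖ ^ 2) ^ 2 + ‖p.2‖ ^ 2) ^ (-β)) (μ.prod ν) := by
  obtain ⟨a, ha, hab⟩ : ∃ a, (Module.finrank ℝ E : ℝ) / 4 < a ∧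
      a < β - (Module.finrank ℝ F : ℝ) / 2 := exists_between (by linarith)
  obtain ⟨b, rfl⟩ : ∃ b, β = a + b := ⟨β - a, by ring⟩
  have ha₀ : 0 ≤ a := le_trans (by positivity) ha.le
  have hb : (Module.finrank ℝ F : ℝ) / 2 < b := by linarith
  have hb₀ : 0 ≤ b := le_trans (by positivity) hb.le
  have hE : Integrable (fun x : E => (1 + ‖x‖ ^ 2) ^ (-(4 * a) / 2)) μ :=
    integrable_rpow_neg_one_add_norm_sq (by linarith)
  have hF : Integrable (fun y : F => (1 + ‖y‖ ^ 2) ^ (-(2 * b) / 2)) ν :=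
    integrable_rpow_neg_one_add_norm_sq (by linarith)
  have hcont : Continuous fun p : E × F => ((1 + ‖p.1‖ ^ 2) ^ 2 + ‖p.2‖ ^ 2) ^ (-(a + b)) :=
    Continuous.rpow_const (by fun_prop) fun p => Or.inl (by positivity)
  refine (hE.mul_prod hF).mono' hcont.aestronglyMeasurable (.of_forall fun p => ?_)
  have hsq : ((1 + ‖p.1‖ ^ 2) ^ 2) ^ (-a) = (1 + ‖p.1‖ ^ 2) ^ (-(4 * a) / 2) := by
    rw [← rpow_natCast_mul (by positivity)]
    push_cast
    ring_nf
  rw [norm_of_nonneg (by positivity), ← hsq, show -(2 * b) / 2 = -b by ring]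
  exact rpow_neg_add_le_mul_rpow_neg (by positivity) (by positivity)
    (by linarith [sq_nonneg ‖p.2‖]) (by gcongr; nlinarith [sq_nonneg ‖p.1‖]) ha₀ hb₀

end ParabolicDecay

section HeisenbergGroup

variable {n : ℕ}

lemma normSq_nonneg (z : Fin n → ℂ) : 0 ≤ normSq z :=
  Finset.sum_nonneg fun _ _ => sq_nonneg _

lemma continuous_normSq : Continuous (normSq : (Fin n → ℂ) → ℝ) := by
  unfold normSq
  fun_prop

lemma normSq_smul (c : ℝ) (z : Fin n → ℂ) : normSq (c • z) = c ^ 2 * normSq z := by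
  simp [normSq, mul_pow, Finset.mul_sum]

-- The norm on `Fin n → ℂ` is the sup norm.
lemma norm_sq_le_normSq (z : Fin n → ℂ) : ‖z‖ ^ 2 ≤ normSq z := by
  rw [← le_sqrt (norm_nonneg z) (normSq_nonneg z), pi_norm_le_iff_of_nonneg (sqrt_nonneg _)]
  exact fun i => le_sqrt_of_sq_le <|
    Finset.single_le_sum (f := fun j => ‖z j‖ ^ 2) (fun _ _ => sq_nonneg _) (Finset.mem_univ i)

/-- `N(z, τ) = |1 + |z|² + iτ|²`, the reciprocal, up to a constant, of the conformal factor of the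
Cayley transform from the Heisenberg group to the sphere in `ℂⁿ⁺¹`. -/
noncomputable def cayleyWeight (p : (Fin n → ℂ) × ℝ) : ℝ := p.2 ^ 2 + (1 + normSq p.1) ^ 2

/-- The Heisenberg dilation `δ_c(z, τ) = (cz, c²τ)`. -/
noncomputable def heisenbergDilation (c : ℝ) (p : (Fin n → ℂ) × ℝ) : (Fin n → ℂ) × ℝ :=
  (c • p.1, c ^ 2 * p.2)

lemma one_le_cayleyWeight (p : (Fin n → ℂ) × ℝ) : 1 ≤ cayleyWeight p := by
  have := normSq_nonneg p.1
  unfold cayleyWeight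
  nlinarith [sq_nonneg p.2]

lemma cayleyWeight_pos (p : (Fin n → ℂ) × ℝ) : 0 < cayleyWeight p :=
  one_pos.trans_le (one_le_cayleyWeight p)

lemma continuous_cayleyWeight : Continuous (cayleyWeight : (Fin n → ℂ) × ℝ → ℝ) := by
  have := continuous_normSq (n := n)
  unfold cayleyWeight
  fun_prop

lemma continuous_heisenbergDilation (c : ℝ) :
    Continuous (heisenbergDilation c : (Fin n → ℂ) × ℝ → (Fin n → ℂ) × ℝ) := by
  unfold heisenbergDilation
  fun_prop

lemma cayleyWeight_heisenbergDilation (c : ℝ) (p : (Fin n → ℂ) × ℝ) :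
    cayleyWeight (heisenbergDilation c p) = (1 + c ^ 2 * normSq p.1) ^ 2 + c ^ 4 * p.2 ^ 2 := by
  simp only [cayleyWeight, heisenbergDilation, normSq_smul]
  ring

lemma pow_four_mul_cayleyWeight_le {c : ℝ} (hc : c ^ 2 ≤ 1) (p : (Fin n → ℂ) × ℝ) :
    c ^ 4 * cayleyWeight p ≤ cayleyWeight (heisenbergDilation c p) := by
  have := normSq_nonneg p.1
  calc c ^ 4 * cayleyWeight p
      = (c ^ 2 + c ^ 2 * normSq p.1) ^ 2 + c ^ 4 * p.2 ^ 2 := by unfold cayleyWeight; ring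
    _ ≤ (1 + c ^ 2 * normSq p.1) ^ 2 + c ^ 4 * p.2 ^ 2 := by gcongr
    _ = cayleyWeight (heisenbergDilation c p) := (cayleyWeight_heisenbergDilation c p).symm

lemma rpow_pow_four_mul_cayleyWeight_le {c θ : ℝ} (hc : c ^ 2 ≤ 1) (hθ : θ ∈ Icc (0 : ℝ) 1)
    (p : (Fin n → ℂ) × ℝ) :
    (c ^ 4 * cayleyWeight p) ^ θ ≤ cayleyWeight (heisenbergDilation c p) :=
  have hp := cayleyWeight_pos p
  calc (c ^ 4 * cayleyWeight p) ^ θ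
      ≤ cayleyWeight (heisenbergDilation c p) ^ θ :=
        rpow_le_rpow (by positivity) (pow_four_mul_cayleyWeight_le hc p) hθ.1
    _ ≤ cayleyWeight (heisenbergDilation c p) :=
        rpow_le_self_of_one_le (one_le_cayleyWeight _) hθ.2

lemma sq_div_cayleyWeight_heisenbergDilation_le {ε α : ℝ} (hε : ε ∈ Ioc (0 : ℝ) 1)
    (hα : α ∈ Icc (-2 : ℝ) 2) (p : (Fin n → ℂ) × ℝ) :
    ε ^ 2 / cayleyWeight (heisenbergDilation ε p) ≤
      ε ^ α * cayleyWeight p ^ (-((2 - α) / 4)) := by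
  have hε₀ := hε.1
  have hp := cayleyWeight_pos p
  have hθ : (2 - α) / 4 ∈ Icc (0 : ℝ) 1 := ⟨by linarith [hα.2], by linarith [hα.1]⟩
  have hpow : (ε ^ 4) ^ ((2 - α) / 4) = ε ^ 2 / ε ^ α := by
    rw [← rpow_natCast_mul hε₀.le, ← rpow_two, ← rpow_sub hε₀]
    push_cast
    ring_nf
  calc ε ^ 2 / cayleyWeight (heisenbergDilation ε p)
      ≤ ε ^ 2 / (ε ^ 4 * cayleyWeight p) ^ ((2 - α) / 4) := by
        gcongr
        exact rpow_pow_four_mul_cayleyWeight_le (pow_le_one₀ hε₀.le hε.2) hθ p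
    _ = ε ^ α * cayleyWeight p ^ (-((2 - α) / 4)) := by
        rw [mul_rpow (by positivity) hp.le, hpow, rpow_neg hp.le]
        field_simp

lemma integrable_cayleyWeight_rpow_neg {β : ℝ} (hβ : ((n : ℝ) + 1) / 2 < β) :
    Integrable fun p : (Fin n → ℂ) × ℝ => cayleyWeight p ^ (-β) := by
  have hrank : (Module.finrank ℝ (Fin n → ℂ) : ℝ) = n * 2 := by
    simp [Module.finrank_pi_fintype]
  have hcont : Continuous fun p : (Fin n → ℂ) × ℝ => cayleyWeight p ^ (-β) :=
    continuous_cayleyWeight.rpow_const fun p => Or.inl (cayleyWeight_pos p).ne'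
  refine (integrable_sq_one_add_norm_sq_add_norm_sq_rpow_neg (volume : Measure (Fin n → ℂ))
    (volume : Measure ℝ) (β := β) ?_).mono' hcont.aestronglyMeasurable (.of_forall fun p => ?_)
  · rw [hrank, Module.finrank_self]
    push_cast
    linarith
  · rw [norm_of_nonneg (rpow_nonneg (cayleyWeight_pos p).le _)]
    refine rpow_le_rpow_of_nonpos (by positivity) ?_ (by linarith [n.cast_nonneg (α := ℝ)])
    rw [cayleyWeight, norm_eq_abs, sq_abs, add_comm]
    gcongr
    exact norm_sq_le_normSq p.1

/-- The integrand, in Cayley coordinates `p = (z, τ)`, of the squared `L²`-norm of the horizontal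
gradient of the conformal CR diffeomorphism `φ` with dilation parameter `ε`. -/
noncomputable def horizontalEnergyDensity (ε : ℝ) (p : (Fin n → ℂ) × ℝ) : ℝ :=
  (4 * (n : ℝ) * ε ^ 2 / ((1 + ε ^ 2 * normSq p.1) ^ 2 + ε ^ 4 * p.2 ^ 2)) *
    (4 / (p.2 ^ 2 + (1 + normSq p.1) ^ 2)) ^ n

lemma horizontalEnergyDensity_eq (ε : ℝ) (p : (Fin n → ℂ) × ℝ) :
    horizontalEnergyDensity ε p =
      4 * n * ε ^ 2 / cayleyWeight (heisenbergDilation ε p) * (4 / cayleyWeight p) ^ n := by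
  rw [cayleyWeight_heisenbergDilation, cayleyWeight, horizontalEnergyDensity]

lemma horizontalEnergyDensity_nonneg (ε : ℝ) (p : (Fin n → ℂ) × ℝ) :
    0 ≤ horizontalEnergyDensity ε p := by
  have := cayleyWeight_pos p
  have := cayleyWeight_pos (heisenbergDilation ε p)
  rw [horizontalEnergyDensity_eq]
  positivity

lemma continuous_horizontalEnergyDensity (ε : ℝ) :
    Continuous (horizontalEnergyDensity ε : (Fin n → ℂ) × ℝ → ℝ) := by
  simp only [funext (horizontalEnergyDensity_eq ε)]
  have hdil := continuous_cayleyWeight.comp (continuous_heisenbergDilation (n := n) ε)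
  exact (continuous_const.div hdil fun _ => (cayleyWeight_pos _).ne').mul
    ((continuous_const.div continuous_cayleyWeight fun _ => (cayleyWeight_pos _).ne').pow n)

lemma horizontalEnergyDensity_le {ε α : ℝ} (hε : ε ∈ Ioc (0 : ℝ) 1) (hα : α ∈ Icc (-2 : ℝ) 2)
    (p : (Fin n → ℂ) × ℝ) :
    horizontalEnergyDensity ε p ≤
      4 * n * 4 ^ n * ε ^ α * cayleyWeight p ^ (-(n + (2 - α) / 4)) := by
  have hp := cayleyWeight_pos p
  calc horizontalEnergyDensity ε p
      = 4 * n * 4 ^ n * (ε ^ 2 / cayleyWeight (heisenbergDilation ε p)) *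
          cayleyWeight p ^ (-(n : ℝ)) := by
        rw [horizontalEnergyDensity_eq, rpow_neg hp.le, rpow_natCast, div_pow]
        ring
    _ ≤ 4 * n * 4 ^ n * (ε ^ α * cayleyWeight p ^ (-((2 - α) / 4))) *
          cayleyWeight p ^ (-(n : ℝ)) := by
        gcongr
        exact sq_div_cayleyWeight_heisenbergDilation_le hε hα p
    _ = 4 * n * 4 ^ n * ε ^ α * cayleyWeight p ^ (-(n + (2 - α) / 4)) := by
        rw [neg_add, rpow_add hp]
        ring

end HeisenbergGroup

theorem stmt_14_general (n : ℕ) {α : ℝ} (hα : α ∈ Icc (-2 : ℝ) 2) (hαn : α < 2 * n) :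
    ∃ C : ℝ, 0 < C ∧ ∀ ε : ℝ, ε ∈ Ioc (0 : ℝ) 1 →
      Integrable (horizontalEnergyDensity ε : (Fin n → ℂ) × ℝ → ℝ) ∧
        ∫ p : (Fin n → ℂ) × ℝ, horizontalEnergyDensity ε p ≤ C * ε ^ α := by
  let g (p : (Fin n → ℂ) × ℝ) : ℝ := cayleyWeight p ^ (-(n + (2 - α) / 4))
  have hg : Integrable g := integrable_cayleyWeight_rpow_neg (by linarith)
  have hg₀ : 0 ≤ ∫ p, g p := integral_nonneg fun p => rpow_nonneg (cayleyWeight_pos p).le _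
  refine ⟨4 * n * 4 ^ n * (∫ p, g p) + 1, by positivity, fun ε hε => ?_⟩
  have hbound : Integrable fun p => 4 * n * 4 ^ n * ε ^ α * g p := hg.const_mul _
  have hint : Integrable (horizontalEnergyDensity ε : (Fin n → ℂ) × ℝ → ℝ) :=
    hbound.mono' (continuous_horizontalEnergyDensity ε).aestronglyMeasurable <|
      .of_forall fun p => by
        rw [norm_of_nonneg (horizontalEnergyDensity_nonneg ε p)]
        exact horizontalEnergyDensity_le hε hα p
  refine ⟨hint, ?_⟩
  calc ∫ p : (Fin n → ℂ) × ℝ, horizontalEnergyDensity ε p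
      ≤ ∫ p, 4 * n * 4 ^ n * ε ^ α * g p :=
        integral_mono hint hbound (horizontalEnergyDensity_le hε hα)
    _ = 4 * n * 4 ^ n * (∫ p, g p) * ε ^ α := by rw [integral_const_mul]; ring
    _ ≤ (4 * n * 4 ^ n * (∫ p, g p) + 1) * ε ^ α := by
        have := rpow_nonneg hε.1.le α
        gcongr
        linarith

theorem stmt_14 (n : ℕ) (hn : 2 ≤ n) :
    ∃ C : ℝ, 0 < C ∧ ∀ ε : ℝ, ε ∈ Ioc (0 : ℝ) 1 →
      (∫ p : (Fin n → ℂ) × ℝ,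
          (4 * (n : ℝ) * ε ^ 2 / ((1 + ε ^ 2 * normSq p.1) ^ 2 + ε ^ 4 * p.2 ^ 2)) *
            (4 / (p.2 ^ 2 + (1 + normSq p.1) ^ 2)) ^ n) ≤ C * ε := by
  have hn' : (2 : ℝ) ≤ n := by exact_mod_cast hn
  obtain ⟨C, hC, h⟩ := stmt_14_general n (α := 1) (by norm_num) (by linarith)
  exact ⟨C, hC, fun ε hε => by simpa only [horizontalEnergyDensity, rpow_one] using (h ε hε).2⟩
end
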